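/- arXiv:1607.00086 — 2 statements merged into one kernel-verified Lean document; each statement's English description precedes it below -/
import Mathlib

section
/- Let (W,S) be a Coxeter system. For each w ∈ W, the set of faces of Ξ represented by w, namely {(I,w,J) ∈ Ξ}, equals the interval [R_w, F_w] where R_w = (Asc_L(w), w, Asc_R(w)) and F_w = (∅, w, ∅), and this interval is order-isomorphic to the product of powersets of Asc_L(w) and Asc_R(w). Moreover, Ξ is the disjoint union over w ∈ W of the intervals [R_w, F_w]. -/
/-!
The content of the theorem beyond bookkeeping is that a double coset `W_I w W_J` contains only one
element having no left descent in `I` and no right descent in `J` (`isMinRep_unique`). A face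
`(I, v, J)` between `R_w` and `F_w` satisfies `w ∈ W_I v W_J`, and both `v` and `w` have no
left descent in `I` and no right descent in `J`, so `v = w`. Once `w` is fixed, `W_I w W_J` is
monotone in `(I, J)`, so the order on faces is reverse inclusion of `I` and `J`, and complementation
turns it into the inclusion order on the product of powersets.

Uniqueness comes from the deletion property (`exists_reduced_sublist`): every word contains a
reduced subword with the same product. If `m` has minimal length in `W_I v W_J` and `v = a m b`,
delete letters from the concatenation of words for `a`, `m`, `b`. Minimality of `m` protects the
middle block, and a surviving letter in an outer block would be a descent of `v` in `I` or `J`.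

Deletion rests on the exchange property (`simple_mem_rightInvSeq`). The group `W` acts on
`W × ZMod 2` with `s_i` sending `(t, ε)` to `(s_i t s_i, ε + [t = s_i])`. Hence the parity of the
number of occurrences of `t` in the right inversion sequence of a word depends only on the product
of the word. Comparing with a reduced word that ends in a right descent `i` shows that `s_i` occurs
in the inversion sequence of every word for the same element.
-/

open CoxeterSystem

variable {B W : Type*} [Group W] {M : CoxeterMatrix B}

/-- The standard parabolic subgroup `W_I` generated by the simple reflections indexed by `I`. -/
def CoxeterSystem.parab (cs : CoxeterSystem M W) (I : Set B) : Subgroup W :=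
  Subgroup.closure (cs.simple '' I)

/-- The parabolic double coset `W_I w W_J`. -/
def CoxeterSystem.doset (cs : CoxeterSystem M W) (I : Set B) (w : W) (J : Set B) : Set W :=
  {x | ∃ a ∈ cs.parab I, ∃ b ∈ cs.parab J, x = a * w * b}

/-- `w` is a minimal-length double coset representative for `W_I \ W / W_J`:
`Des_L(w) ⊆ S − I` and `Des_R(w) ⊆ S − J`. -/
def CoxeterSystem.isMinRep (cs : CoxeterSystem M W) (I : Set B) (w : W) (J : Set B) : Prop :=
  (∀ i ∈ I, ¬ cs.IsLeftDescent w i) ∧ (∀ j ∈ J, ¬ cs.IsRightDescent w j)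

/-- Membership in the two-sided Coxeter complex `Ξ`: a triple `(I, w, J)` with
`w ∈ ᴵWᴶ` a minimal-length double coset representative. -/
def CoxeterSystem.inXi (cs : CoxeterSystem M W) (F : Set B × W × Set B) : Prop :=
  cs.isMinRep F.1 F.2.1 F.2.2

/-- The partial order on `Ξ`: `(I,w,J) ≤ (I',w',J')` iff `I ⊇ I'`, `J ⊇ J'`, and
`W_I w W_J ⊇ W_{I'} w' W_{J'}`. -/
def CoxeterSystem.xiLE (cs : CoxeterSystem M W) (F G : Set B × W × Set B) : Prop :=
  G.1 ⊆ F.1 ∧ G.2.2 ⊆ F.2.2 ∧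
    cs.doset G.1 G.2.1 G.2.2 ⊆ cs.doset F.1 F.2.1 F.2.2

/-! ### The exchange property -/

theorem CoxeterSystem.functionEnd_mul_apply {X : Type*} (f g : Function.End X) (x : X) :
    (f * g) x = f (g x) := rfl

open Classical in
/-- The map `(t, ε) ↦ (s_i t s_i, ε + [t = s_i])`. The first coordinate ranges over all of `W`
rather than just the reflections, which changes nothing in the argument. -/
noncomputable def CoxeterSystem.signedConj (cs : CoxeterSystem M W) (i : B) :
    Function.End (W × ZMod 2) :=
  fun p ↦ (cs.simple i * p.1 * cs.simple i, p.2 + if p.1 = cs.simple i then 1 else 0)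

open Classical in
/-- With `c = s_i s_j`, the sign of `t` under the action of `(s_i s_j)^n` changes once for each
`r < 2n` such that `t = c⁻ʳ s_j`. -/
theorem CoxeterSystem.signedConj_mul_pow (cs : CoxeterSystem M W) (i j : B) (n : ℕ) (t : W)
    (ε : ZMod 2) :
    ((cs.signedConj i * cs.signedConj j) ^ n) (t, ε) =
      ((cs.simple i * cs.simple j) ^ n * t * ((cs.simple i * cs.simple j) ^ n)⁻¹,
        ε + ∑ r ∈ Finset.range (2 * n),
          if t = ((cs.simple i * cs.simple j)⁻¹) ^ r * cs.simple j then 1 else 0) := by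
  induction n with
  | zero => simp; rfl
  | succ n ih =>
    set c := cs.simple i * cs.simple j with hc
    have hconj : SemiconjBy (cs.simple j) c c⁻¹ := by
      simp [SemiconjBy, hc, mul_assoc]
    have hpow : cs.simple j * c ^ n = (c⁻¹) ^ n * cs.simple j := hconj.pow_right n
    have h1 : c ^ n * t * (c ^ n)⁻¹ = cs.simple j ↔ t = (c⁻¹) ^ (2 * n) * cs.simple j := by
      rw [two_mul, pow_add, mul_assoc ((c⁻¹) ^ n), ← hpow, mul_inv_eq_iff_eq_mul,
        inv_pow, eq_inv_mul_iff_mul_eq]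
    have h2 : cs.simple j * (c ^ n * t * (c ^ n)⁻¹) * cs.simple j = cs.simple i ↔
        t = (c⁻¹) ^ (2 * n + 1) * cs.simple j := by
      have e : (c⁻¹) ^ (2 * n + 1) * cs.simple j
          = (c ^ n)⁻¹ * (cs.simple j * cs.simple i * cs.simple j) * c ^ n := by
        have : cs.simple j * cs.simple i = c⁻¹ := by simp [hc]
        rw [this, mul_assoc _ _ (c ^ n), mul_assoc c⁻¹, hpow, ← inv_pow, ← mul_assoc, ← mul_assoc,
          ← pow_succ, ← pow_add]
        congr 2; omega
      rw [e]
      constructor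
      · intro h
        rw [← h]
        simp [mul_assoc]
      · intro h
        rw [h]
        simp [mul_assoc]
    rw [pow_succ', functionEnd_mul_apply, ih, functionEnd_mul_apply]
    simp only [signedConj, h1, h2]
    rw [show 2 * (n + 1) = 2 * n + 1 + 1 by ring, Finset.sum_range_succ, Finset.sum_range_succ]
    refine Prod.ext ?_ ?_
    · rw [pow_succ' c n, mul_inv_rev]
      simp [hc, mul_assoc]
    · simp only [add_assoc]

theorem CoxeterSystem.signedConj_isLiftable (cs : CoxeterSystem M W) :
    M.IsLiftable cs.signedConj := by
  classical
  intro i j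
  funext ⟨t, ε⟩
  have hp := cs.simple_mul_simple_pow i j
  rw [signedConj_mul_pow, hp, two_mul, Finset.sum_range_add]
  -- the reflections are periodic with period `M i j`, so the sum is twice the sum over one period
  have : ∀ r, (cs.simple i * cs.simple j)⁻¹ ^ (M i j + r) = (cs.simple i * cs.simple j)⁻¹ ^ r := by
    intro r
    rw [pow_add, inv_pow _ (M i j), hp, inv_one, one_mul]
  simp only [this, CharTwo.add_self_eq_zero]
  simp [Function.End.one_def]

/-- The action of `W` on `W × ZMod 2` through the maps `signedConj`. -/
noncomputable def CoxeterSystem.signedAction (cs : CoxeterSystem M W) :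
    W →* Function.End (W × ZMod 2) :=
  cs.lift ⟨cs.signedConj, cs.signedConj_isLiftable⟩

open Classical in
/-- The action records the parity of multiplicities in right inversion sequences, so this parity
depends on the product of the word only. -/
theorem CoxeterSystem.signedAction_wordProd (cs : CoxeterSystem M W) (ω : List B) (t : W)
    (ε : ZMod 2) :
    cs.signedAction (cs.wordProd ω) (t, ε) =
      (cs.wordProd ω * t * (cs.wordProd ω)⁻¹, ε + ((cs.rightInvSeq ω).count t : ZMod 2)) := by
  induction ω with
  | nil => simp; rfl
  | cons i ω ih =>
    have hi : cs.signedAction (cs.simple i) = cs.signedConj i :=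
      cs.lift_apply_simple cs.signedConj_isLiftable i
    rw [wordProd_cons, map_mul, functionEnd_mul_apply, ih, hi, signedConj,
      rightInvSeq, List.count_cons]
    have h : cs.wordProd ω * t * (cs.wordProd ω)⁻¹ = cs.simple i ↔
        (cs.wordProd ω)⁻¹ * cs.simple i * cs.wordProd ω = t := by
      constructor
      · intro h; rw [← h]; group
      · intro h; rw [← h]; group
    refine Prod.ext ?_ ?_
    · simp [mul_assoc]
    · simp [h, add_assoc]

/-- Exchange property: if `i` is a right descent of the product of a word, not necessarily reduced,
then multiplying by `s_i` on the right amounts to deleting a letter. -/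
theorem CoxeterSystem.simple_mem_rightInvSeq (cs : CoxeterSystem M W) {ω : List B} {i : B}
    (h : cs.IsRightDescent (cs.wordProd ω) i) : cs.simple i ∈ cs.rightInvSeq ω := by
  classical
  obtain ⟨ω', hred, hω'⟩ := cs.exists_isReduced (cs.wordProd ω * cs.simple i)
  have hprod : cs.wordProd (ω'.concat i) = cs.wordProd ω := by
    rw [wordProd_concat, ← hω', simple_mul_simple_cancel_right]
  have hred' : cs.IsReduced (ω'.concat i) := by
    have h1 := cs.isRightDescent_iff.1 h
    have h2 := hred.eq
    rw [← hω'] at h2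
    rw [IsReduced, hprod, List.length_concat]
    omega
  have hmem : cs.simple i ∈ cs.rightInvSeq (ω'.concat i) := by
    rw [rightInvSeq_concat]; simp
  have hcount := List.count_eq_one_of_mem hred'.nodup_rightInvSeq hmem
  have e1 := cs.signedAction_wordProd ω (cs.simple i) 0
  have e2 := cs.signedAction_wordProd (ω'.concat i) (cs.simple i) 0
  rw [hprod, e1, hcount] at e2
  have e3 := congrArg Prod.snd e2
  by_contra hn
  rw [List.count_eq_zero_of_not_mem hn] at e3
  simp at e3

/-! ### The deletion property -/

theorem CoxeterSystem.exists_reduced_sublist (cs : CoxeterSystem M W) (ω : List B) :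
    ∃ ω', ω'.Sublist ω ∧ cs.IsReduced ω' ∧ cs.wordProd ω' = cs.wordProd ω := by
  induction ω using List.reverseRecOn with
  | nil => exact ⟨[], List.Sublist.refl _, by simp [IsReduced], rfl⟩
  | append_singleton ω i ih =>
    obtain ⟨ω', hsub, hred, hprod⟩ := ih
    have hcat : cs.wordProd (ω ++ [i]) = cs.wordProd ω' * cs.simple i := by
      rw [wordProd_append, hprod, wordProd_singleton]
    by_cases hd : cs.IsRightDescent (cs.wordProd ω') i
    · obtain ⟨j, hj, hji⟩ := List.getElem_of_mem (cs.simple_mem_rightInvSeq hd)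
      have hj' : j < ω'.length := by simpa using hj
      have he : cs.wordProd (ω'.eraseIdx j) = cs.wordProd ω' * cs.simple i := by
        rw [← wordProd_mul_getD_rightInvSeq, List.getD_eq_getElem _ _ hj, hji]
      refine ⟨ω'.eraseIdx j, (List.eraseIdx_sublist _ _).trans
        (hsub.trans (List.sublist_append_left _ _)), ?_, he.trans hcat.symm⟩
      have h1 := cs.isRightDescent_iff.1 hd
      have h2 := hred.eq
      rw [IsReduced, he, List.length_eraseIdx_of_lt hj']
      omega
    · refine ⟨ω' ++ [i], hsub.append_right _, ?_, by rw [hcat, wordProd_append, wordProd_singleton]⟩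
      have h1 := cs.not_isRightDescent_iff.1 hd
      rw [IsReduced, wordProd_append, wordProd_singleton, h1, hred.eq]
      simp

/-! ### Minimal double coset representatives -/

theorem CoxeterSystem.wordProd_mem_parab (cs : CoxeterSystem M W) {I : Set B} {ω : List B}
    (h : ∀ i ∈ ω, i ∈ I) : cs.wordProd ω ∈ cs.parab I := by
  refine Subgroup.list_prod_mem _ fun x hx ↦ ?_
  obtain ⟨i, hi, rfl⟩ := List.mem_map.1 hx
  exact Subgroup.subset_closure ⟨i, h i hi, rfl⟩

theorem CoxeterSystem.exists_word_of_mem_parab (cs : CoxeterSystem M W) {I : Set B} {a : W}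
    (h : a ∈ cs.parab I) : ∃ ω : List B, (∀ i ∈ ω, i ∈ I) ∧ cs.wordProd ω = a := by
  induction h using Subgroup.closure_induction with
  | mem x hx =>
    obtain ⟨i, hi, rfl⟩ := hx
    exact ⟨[i], by simpa using hi, by simp⟩
  | one => exact ⟨[], by simp, by simp⟩
  | mul x y _ _ hx hy =>
    obtain ⟨ω, h1, rfl⟩ := hx
    obtain ⟨ω', h2, rfl⟩ := hy
    refine ⟨ω ++ ω', fun i hi ↦ ?_, wordProd_append ..⟩
    exact (List.mem_append.1 hi).elim (h1 i) (h2 i)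
  | inv x _ hx =>
    obtain ⟨ω, h1, rfl⟩ := hx
    exact ⟨ω.reverse, fun i hi ↦ h1 i (List.mem_reverse.1 hi), wordProd_reverse ..⟩

theorem CoxeterSystem.mem_doset_self (cs : CoxeterSystem M W) (I : Set B) (w : W) (J : Set B) :
    w ∈ cs.doset I w J :=
  ⟨1, one_mem _, 1, one_mem _, by simp⟩

theorem CoxeterSystem.doset_symm (cs : CoxeterSystem M W) {I J : Set B} {v w : W}
    (h : v ∈ cs.doset I w J) :
    w ∈ cs.doset I v J := by
  obtain ⟨a, ha, b, hb, rfl⟩ := h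
  exact ⟨a⁻¹, inv_mem ha, b⁻¹, inv_mem hb, by group⟩

theorem CoxeterSystem.doset_trans (cs : CoxeterSystem M W) {I J : Set B} {u v w : W}
    (h : u ∈ cs.doset I v J) (h' : v ∈ cs.doset I w J) : u ∈ cs.doset I w J := by
  obtain ⟨a, ha, b, hb, rfl⟩ := h
  obtain ⟨a', ha', b', hb', rfl⟩ := h'
  exact ⟨a * a', mul_mem ha ha', b' * b, mul_mem hb' hb, by group⟩

theorem CoxeterSystem.doset_mono (cs : CoxeterSystem M W) {I I' J J' : Set B} (w : W) (hI : I ⊆ I')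
    (hJ : J ⊆ J') : cs.doset I w J ⊆ cs.doset I' w J' := by
  rintro x ⟨a, ha, b, hb, rfl⟩
  exact ⟨a, Subgroup.closure_mono (Set.image_mono hI) ha, b,
    Subgroup.closure_mono (Set.image_mono hJ) hb, rfl⟩

/-- Having no descents in `I` and `J` forces equality with any element of minimal length in the
double coset. -/
theorem CoxeterSystem.isMinRep_eq_of_minimal (cs : CoxeterSystem M W) {I J : Set B} {v m : W}
    (hv : cs.isMinRep I v J) (hm : v ∈ cs.doset I m J)
    (hmin : ∀ x ∈ cs.doset I m J, cs.length m ≤ cs.length x) : v = m := by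
  obtain ⟨a, ha, b, hb, rfl⟩ := hm
  obtain ⟨α, hα, rfl⟩ := cs.exists_word_of_mem_parab ha
  obtain ⟨β, hβ, rfl⟩ := cs.exists_word_of_mem_parab hb
  obtain ⟨μ, hμ, rfl⟩ := cs.exists_isReduced m
  obtain ⟨ω, hsub, hred, hprod⟩ := cs.exists_reduced_sublist (α ++ μ ++ β)
  simp only [wordProd_append] at hprod
  rw [← hprod] at hv ⊢
  obtain ⟨ω₁, β', rfl, hsub₁, hβ'⟩ := List.sublist_append_iff.1 hsub
  obtain ⟨α', μ', rfl, hα', hμ'⟩ := List.sublist_append_iff.1 hsub₁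
  have hαI : ∀ i ∈ α', i ∈ I := fun i hi ↦ hα i (hα'.subset hi)
  have hβJ : ∀ i ∈ β', i ∈ J := fun i hi ↦ hβ i (hβ'.subset hi)
  -- the middle block represents an element of the same double coset, so it loses no letter
  have hμμ : μ' = μ := by
    refine hμ'.eq_of_length_le ?_
    rw [← hμ.eq]
    refine (hmin _ (cs.doset_trans (v := cs.wordProd α * cs.wordProd μ * cs.wordProd β) ?_
      ⟨_, ha, _, hb, rfl⟩)).trans (cs.length_wordProd_le _)
    apply cs.doset_symm
    rw [← hprod]
    exact ⟨_, cs.wordProd_mem_parab hαI, _, cs.wordProd_mem_parab hβJ,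
      by simp [wordProd_append, mul_assoc]⟩
  subst hμμ
  have hα0 : α' = [] := by
    cases α' with
    | nil => rfl
    | cons i α' =>
      refine absurd ?_ (hv.1 i (hαI i (by simp)))
      have h := cs.length_wordProd_le (α' ++ μ' ++ β')
      have h2 := hred.eq
      simp only [List.cons_append, wordProd_cons, List.length_cons] at h2 ⊢
      rw [IsLeftDescent, simple_mul_simple_cancel_left]
      omega
  have hβ0 : β' = [] := by
    rcases List.eq_nil_or_concat β' with h | ⟨β'', j, rfl⟩
    · exact h
    · refine absurd ?_ (hv.2 j (hβJ j (by simp)))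
      have h := cs.length_wordProd_le (α' ++ μ' ++ β'')
      have h2 := hred.eq
      have hcat : α' ++ μ' ++ β''.concat j = (α' ++ μ' ++ β'').concat j := by simp
      rw [hcat, wordProd_concat, List.length_concat] at h2
      rw [hcat, wordProd_concat, IsRightDescent, simple_mul_simple_cancel_right]
      omega
  simp [hα0, hβ0]

theorem CoxeterSystem.isMinRep_unique (cs : CoxeterSystem M W) {I J : Set B} {v w : W}
    (hv : cs.isMinRep I v J) (hw : cs.isMinRep I w J) (h : w ∈ cs.doset I v J) : v = w := by
  obtain ⟨m, hm, hmin⟩ := exists_minimalFor_of_wellFoundedLT (· ∈ cs.doset I v J) cs.length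
    ⟨v, cs.mem_doset_self I v J⟩
  have hmin' : ∀ x ∈ cs.doset I m J, cs.length m ≤ cs.length x := fun x hx ↦
    (le_total _ _).elim id (hmin (cs.doset_trans hx hm))
  have hvm := cs.doset_symm hm
  rw [cs.isMinRep_eq_of_minimal hv hvm hmin',
    cs.isMinRep_eq_of_minimal hw (cs.doset_trans h hvm) hmin']

/-- Between faces with the same representative, the order is reverse inclusion of `I` and `J`. -/
theorem CoxeterSystem.xiLE_iff_of_eq (cs : CoxeterSystem M W) {F G : Set B × W × Set B}
    (h : F.2.1 = G.2.1) : cs.xiLE F G ↔ G.1 ⊆ F.1 ∧ G.2.2 ⊆ F.2.2 := by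
  refine ⟨fun hs ↦ ⟨hs.1, hs.2.1⟩, fun hs ↦ ⟨hs.1, hs.2, ?_⟩⟩
  rw [h]
  exact cs.doset_mono _ hs.1 hs.2

/-- For each `w ∈ W`, the faces of `Ξ` represented by `w` form exactly the
interval `[R_w, F_w]` with `R_w = (Asc_L(w), w, Asc_R(w))` and `F_w = (∅, w, ∅)`; this
interval is order-isomorphic to the product of the powersets of `Asc_L(w)` and `Asc_R(w)`;
and `Ξ` is the disjoint union of these intervals over `w ∈ W`. -/
theorem xi_partition (cs : CoxeterSystem M W) :
    (∀ w : W,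
      {F : Set B × W × Set B | cs.inXi F ∧ F.2.1 = w} =
        {F : Set B × W × Set B | cs.inXi F ∧
          cs.xiLE ({i : B | ¬ cs.IsLeftDescent w i}, w, {j : B | ¬ cs.IsRightDescent w j}) F ∧
          cs.xiLE F (∅, w, ∅)}) ∧
    (∀ w : W,
      ∃ e : {F : Set B × W × Set B // cs.inXi F ∧ F.2.1 = w} ≃
          (Set {i : B // ¬ cs.IsLeftDescent w i} × Set {j : B // ¬ cs.IsRightDescent w j}),
        ∀ F₁ F₂, cs.xiLE F₁.1 F₂.1 ↔ e F₁ ≤ e F₂) ∧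
    ({F : Set B × W × Set B | cs.inXi F} =
      ⋃ w : W, {F : Set B × W × Set B | cs.inXi F ∧ F.2.1 = w}) ∧
    (∀ v w : W, v ≠ w →
      Disjoint {F : Set B × W × Set B | cs.inXi F ∧ F.2.1 = v}
        {F : Set B × W × Set B | cs.inXi F ∧ F.2.1 = w}) := by
  refine ⟨fun w ↦ ?_, fun w ↦ ?_, ?_, ?_⟩
  · ext ⟨I, v, J⟩
    simp only [Set.mem_ofPred_eq]
    constructor
    · rintro ⟨hF, rfl⟩
      exact ⟨hF, (cs.xiLE_iff_of_eq (by rfl)).2 ⟨hF.1, hF.2⟩,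
        (cs.xiLE_iff_of_eq (by rfl)).2 ⟨Set.empty_subset _, Set.empty_subset _⟩⟩
    · rintro ⟨hF, hR, hT⟩
      exact ⟨hF, cs.isMinRep_unique hF ⟨hR.1, hR.2.1⟩ (hT.2.2 (cs.mem_doset_self _ _ _))⟩
  -- Larger faces have smaller `I` and `J`, so the isomorphism sends `(I, w, J)` to the
  -- complements of `I` and `J` in the ascent sets.
  · refine ⟨⟨fun F ↦ ({i | i.1 ∉ F.1.1}, {j | j.1 ∉ F.1.2.2}),
      fun P ↦ ⟨({i | ∃ h : ¬ cs.IsLeftDescent w i, ⟨i, h⟩ ∉ P.1}, w,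
        {j | ∃ h : ¬ cs.IsRightDescent w j, ⟨j, h⟩ ∉ P.2}),
        ⟨fun i hi ↦ hi.1, fun j hj ↦ hj.1⟩, rfl⟩, ?_, ?_⟩, ?_⟩
    · rintro ⟨⟨I, v, J⟩, ⟨hI, hJ⟩, rfl⟩
      refine Subtype.ext (Prod.ext ?_ (Prod.ext rfl ?_))
      · ext i
        simpa using hI i
      · ext j
        simpa using hJ j
    · rintro ⟨P, Q⟩
      refine Prod.ext ?_ ?_
      · ext ⟨i, hi⟩
        simp [hi]
      · ext ⟨j, hj⟩
        simp [hj]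
    · rintro ⟨⟨I, v, J⟩, ⟨hI, hJ⟩, rfl⟩ ⟨⟨I', v', J'⟩, ⟨hI', hJ'⟩, h⟩
      rw [cs.xiLE_iff_of_eq h.symm]
      refine and_congr ⟨fun hs i hi hi' ↦ hi (hs hi'), fun hs i hi ↦ ?_⟩
        ⟨fun hs j hj hj' ↦ hj (hs hj'), fun hs j hj ↦ ?_⟩
      · by_contra hn
        have hd : ¬ cs.IsLeftDescent v i := by
          have := hI' i hi
          rwa [h] at this
        exact hs (a := ⟨i, hd⟩) hn hi
      · by_contra hn
        have hd : ¬ cs.IsRightDescent v j := by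
          have := hJ' j hj
          rwa [h] at this
        exact hs (a := ⟨j, hd⟩) hn hj
  · ext F
    simp
  · intro v w hvw
    rw [Set.disjoint_left]
    rintro F ⟨_, rfl⟩ ⟨_, h⟩
    exact hvw h
end

section
/- Let (W,S) be a Coxeter system and let Ξ be the two-sided Coxeter complex. Every interval of length two in the poset Ξ ∪ {1̂} (Ξ with a maximal element adjoined) has exactly four elements; in particular, every interval of length two within Ξ itself has exactly four elements, and every codimension-one face (∅, w, {s}) or ({s}, w, ∅) with s a right (resp. left) ascent of w lies below exactly two maximal faces, namely (∅,w,∅) and (∅,ws,∅) (resp. (∅,w,∅) and (∅,sw,∅)). -/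
/-!
The complex `Ξ` is simplicial: the faces below a face `G = (I', w', J')` correspond bijectively to
the pairs `(I, J)` with `I' ⊆ I` and `J' ⊆ J`, because each double coset `W_I w' W_J` contains
exactly one minimal representative (`exists_isMinRep_forall_eq`), and the order below `G` is reverse
inclusion of pairs. Encoding the pair `(I, J)` as a subset of `B ⊕ B` (the cotype of the face), an
interval `[F, G]` of `Ξ` is therefore the Boolean interval between the cotypes of `G` and `F`
(`card_interval`), and a chain of two covers makes these cotypes differ by two elements, whence four
faces. This does not need `B` or `W` to be finite.

An interval of length two ending at `1̂` starts at a face whose cotype is a singleton, `(∅, w, {s})`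
or `({s}, w, ∅)`. Its double coset is `{w, ws}` or `{w, sw}`, so the interval consists of this face,
two maximal faces and `1̂` (`card_interval_top`).

Uniqueness of minimal representatives rests on the exchange property
(`exists_eraseIdx_of_isRightDescent`), which is obtained from the action of `W` on `W × ℤ/2` by
`sᵢ (t, e) = (sᵢ t sᵢ, e + [t = sᵢ])`. If `x` has minimal length in `W_I x W_J`, the exchange
property shows that every element of the double coset is a product `a x b` with
`ℓ(a x b) = ℓ(a) + ℓ(x) + ℓ(b)`, so an element other than `x` has a left descent in `I` or a
right descent in `J`.
-/

open CoxeterSystem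

variable {B W : Type*} [Group W] {M : CoxeterMatrix B}

/-- Membership in `Ξ ∪ {1̂}`, where `none` is the adjoined maximal element `1̂`. -/
def CoxeterSystem.inXiTop (cs : CoxeterSystem M W) : Option (Set B × W × Set B) → Prop
  | none => True
  | some F => cs.inXi F

/-- The order on `Ξ ∪ {1̂}`. -/
def CoxeterSystem.xiTopLE (cs : CoxeterSystem M W) :
    Option (Set B × W × Set B) → Option (Set B × W × Set B) → Prop
  | _, none => True
  | none, some _ => False
  | some F, some G => cs.xiLE F G

/-- Strict order on `Ξ ∪ {1̂}`. -/
def CoxeterSystem.xiTopLT (cs : CoxeterSystem M W)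
    (a b : Option (Set B × W × Set B)) : Prop :=
  cs.xiTopLE a b ∧ ¬ cs.xiTopLE b a

/-- Cover relation in the poset `Ξ ∪ {1̂}`. -/
def CoxeterSystem.xiTopCovBy (cs : CoxeterSystem M W)
    (a b : Option (Set B × W × Set B)) : Prop :=
  cs.xiTopLT a b ∧ ∀ c, cs.inXiTop c → cs.xiTopLT a c → ¬ cs.xiTopLT c b

/-- Strict order on `Ξ` itself. -/
def CoxeterSystem.xiLT (cs : CoxeterSystem M W) (F G : Set B × W × Set B) : Prop :=
  cs.xiLE F G ∧ ¬ cs.xiLE G F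

/-- Cover relation in the poset `Ξ`. -/
def CoxeterSystem.xiCovBy (cs : CoxeterSystem M W) (F G : Set B × W × Set B) : Prop :=
  cs.xiLT F G ∧ ∀ H, cs.inXi H → cs.xiLT F H → ¬ cs.xiLT H G

namespace CoxeterSystem

/-! ### The exchange property -/

open Classical in
/-- The involution `(t, e) ↦ (sᵢ t sᵢ, e + [t = sᵢ])` of `W × ℤ/2`. -/
noncomputable def signedConj_s19 (cs : CoxeterSystem M W) (i : B) : Function.End (W × ZMod 2) :=
  fun p => (cs.simple i * p.1 * cs.simple i, p.2 + if p.1 = cs.simple i then 1 else 0)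

open Classical in
/-- With `r = sᵢ sⱼ`, the reflections met by the alternating word of length `2n` are the
`sⱼ rᵏ`, `k < 2n`. -/
lemma signedConj_mul_pow_s19 (cs : CoxeterSystem M W) (i j : B) (n : ℕ) (p : W × ZMod 2) :
    ((cs.signedConj_s19 i * cs.signedConj_s19 j) ^ n) p =
      ((cs.simple i * cs.simple j) ^ n * p.1 * ((cs.simple i * cs.simple j) ^ n)⁻¹,
        p.2 + ∑ k ∈ Finset.range (2 * n),
          if p.1 = cs.simple j * (cs.simple i * cs.simple j) ^ k then 1 else 0) := by
  set r := cs.simple i * cs.simple j with hr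
  -- the dihedral relation `rⁿ sⱼ rⁿ = sⱼ`
  have hdih : ∀ n : ℕ, r ^ n * cs.simple j * r ^ n = cs.simple j := by
    intro n
    induction n with
    | zero => simp
    | succ n ih =>
      rw [pow_succ, mul_assoc, mul_assoc, ← pow_succ, pow_succ']
      calc r ^ n * (r * (cs.simple j * (r * r ^ n)))
          = r ^ n * (r * cs.simple j * r) * r ^ n := by group
        _ = r ^ n * cs.simple j * r ^ n := by simp [hr, mul_assoc]
        _ = _ := ih
  have hconj : ∀ (n : ℕ) (t : W), r ^ n * t * (r ^ n)⁻¹ = cs.simple j ↔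
      t = cs.simple j * r ^ (2 * n) := by
    intro n t
    have h : (r ^ n)⁻¹ * cs.simple j = cs.simple j * r ^ n := by
      rw [inv_mul_eq_iff_eq_mul, ← mul_assoc, hdih]
    rw [mul_inv_eq_iff_eq_mul, ← eq_inv_mul_iff_mul_eq, ← mul_assoc, h, mul_assoc, ← pow_add,
      two_mul]
  induction n with
  | zero => simp [Function.End.one_def]
  | succ n ih =>
    rw [pow_succ']
    change (cs.signedConj_s19 i) ((cs.signedConj_s19 j) (((cs.signedConj_s19 i * cs.signedConj_s19 j) ^ n) p)) = _
    rw [ih, show 2 * (n + 1) = 2 * n + 1 + 1 by ring, Finset.sum_range_succ,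
      Finset.sum_range_succ]
    simp only [signedConj_s19, Prod.mk.injEq]
    refine ⟨?_, ?_⟩
    · rw [pow_succ']; simp [hr, mul_assoc]
    · have h2 : cs.simple j * (r ^ n * p.1 * (r ^ n)⁻¹) * cs.simple j = cs.simple i ↔
          p.1 = cs.simple j * r ^ (2 * n + 1) := by
        have e : ∀ x : W, cs.simple j * x * cs.simple j = cs.simple i ↔
            x = cs.simple j * r := by
          intro x
          constructor
          · intro h; rw [hr, ← h]; simp [mul_assoc]
          · rintro rfl; simp [hr, mul_assoc]
        have h : (r ^ n)⁻¹ * cs.simple j = cs.simple j * r ^ n := by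
          rw [inv_mul_eq_iff_eq_mul, ← mul_assoc, hdih]
        rw [e, mul_inv_eq_iff_eq_mul, ← eq_inv_mul_iff_mul_eq, mul_assoc, ← mul_assoc, h,
          ← pow_succ', mul_assoc, ← pow_add]
        congr! 3; ring
      simp only [hconj, h2]
      ring

/-- The maps `signedConj i` satisfy the Coxeter relations, so they define an action of `W`. -/
lemma signedConj_isLiftable_s19 (cs : CoxeterSystem M W) : M.IsLiftable cs.signedConj_s19 := by
  classical
  intro i j
  funext p
  rw [signedConj_mul_pow_s19, two_mul, Finset.sum_range_add]
  -- the sum runs twice over a period of `r`, hence vanishes mod 2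
  simp only [pow_add, cs.simple_mul_simple_pow, one_mul]
  rw [CharTwo.add_self_eq_zero]
  simp [Function.End.one_def]

/-- The action of `W` on `W × ℤ/2` extending `signedConj`. -/
noncomputable def signedAct (cs : CoxeterSystem M W) : W →* Function.End (W × ZMod 2) :=
  cs.lift ⟨cs.signedConj_s19, cs.signedConj_isLiftable_s19⟩

open Classical in
/-- The second coordinate of the action of a word records the parity of the number of occurrences
of a given element in its right inversion sequence. -/
lemma signedAct_wordProd (cs : CoxeterSystem M W) (ω : List B) (p : W × ZMod 2) :
    cs.signedAct (cs.wordProd ω) p = (cs.wordProd ω * p.1 * (cs.wordProd ω)⁻¹,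
      p.2 + ((cs.rightInvSeq ω).count p.1 : ZMod 2)) := by
  induction ω with
  | nil => simp [Function.End.one_def]
  | cons i ω ih =>
    rw [wordProd_cons, map_mul]
    change cs.signedAct (cs.simple i) (cs.signedAct (cs.wordProd ω) p) = _
    rw [ih, signedAct, lift_apply_simple]
    simp only [signedConj_s19, rightInvSeq, Prod.mk.injEq]
    refine ⟨by simp [mul_assoc], ?_⟩
    rw [List.count_cons]
    have : cs.wordProd ω * p.1 * (cs.wordProd ω)⁻¹ = cs.simple i ↔
        (cs.wordProd ω)⁻¹ * cs.simple i * cs.wordProd ω = p.1 := by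
      rw [mul_inv_eq_iff_eq_mul, ← eq_inv_mul_iff_mul_eq, ← mul_assoc, eq_comm]
    simp only [this, beq_iff_eq]
    push_cast
    ring

/-- The exchange property: the parity of the number of occurrences of `sᵢ` in the right inversion
sequence of a word depends only on the product `w` of the word, and it changes when `w` is replaced
by `w sᵢ`. -/
lemma exists_eraseIdx_of_isRightDescent (cs : CoxeterSystem M W) (ω : List B) (i : B)
    (h : cs.IsRightDescent (cs.wordProd ω) i) :
    ∃ k < ω.length, cs.wordProd ω * cs.simple i = cs.wordProd (ω.eraseIdx k) := by
  classical
  have hmem : cs.simple i ∈ cs.rightInvSeq ω := by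
    by_contra hn
    obtain ⟨ω', hω', hw'⟩ := cs.exists_isReduced (cs.wordProd ω * cs.simple i)
    have h1 : cs.signedAct (cs.wordProd ω) (cs.simple i, 0) =
        cs.signedAct (cs.wordProd ω') (cs.signedAct (cs.simple i) (cs.simple i, 0)) := by
      change _ = (cs.signedAct (cs.wordProd ω') * cs.signedAct (cs.simple i)) _
      rw [← map_mul, ← hw']
      simp
    have h2 : cs.signedAct (cs.simple i) (cs.simple i, 0) = (cs.simple i, 1) := by
      rw [signedAct, lift_apply_simple]; simp [signedConj_s19]
    rw [h2, signedAct_wordProd, signedAct_wordProd] at h1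
    have h3 := congrArg Prod.snd h1
    simp only [List.count_eq_zero_of_not_mem hn] at h3
    have hmem' : cs.simple i ∈ cs.rightInvSeq ω' := by
      by_contra hn'
      simp [List.count_eq_zero_of_not_mem hn'] at h3
    have h4 := (cs.isRightInversion_of_mem_rightInvSeq hω' hmem').2
    rw [← hw', simple_mul_simple_cancel_right] at h4
    exact absurd h (not_lt.mpr h4.le)
  obtain ⟨k, hk, hke⟩ := List.mem_iff_getElem.mp hmem
  refine ⟨k, by simpa using hk, ?_⟩
  rw [← cs.wordProd_mul_getD_rightInvSeq, List.getD_eq_getElem _ _ hk, hke]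

/-! ### Minimal double coset representatives -/

lemma mem_parab_iff (cs : CoxeterSystem M W) {I : Set B} {a : W} :
    a ∈ cs.parab I ↔ ∃ α : List B, (∀ i ∈ α, i ∈ I) ∧ cs.wordProd α = a := by
  constructor
  · intro h
    induction h using Subgroup.closure_induction with
    | mem x hx =>
      obtain ⟨i, hi, rfl⟩ := hx
      exact ⟨[i], by simpa using hi, by simp⟩
    | one => exact ⟨[], by simp, by simp⟩
    | mul x y _ _ hx hy =>
      obtain ⟨α, hα, rfl⟩ := hx
      obtain ⟨β, hβ, rfl⟩ := hy
      exact ⟨α ++ β, by grind, cs.wordProd_append α β⟩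
    | inv x _ hx =>
      obtain ⟨α, hα, rfl⟩ := hx
      exact ⟨α.reverse, by simpa using hα, cs.wordProd_reverse α⟩
  · rintro ⟨α, hα, rfl⟩
    induction α with
    | nil => simp [one_mem]
    | cons i α ih =>
      rw [wordProd_cons]
      exact mul_mem (Subgroup.subset_closure ⟨i, hα i (by simp), rfl⟩)
        (ih fun j hj => hα j (by simp [hj]))

lemma simple_mem_parab (cs : CoxeterSystem M W) {I : Set B} {i : B} (hi : i ∈ I) :
    cs.simple i ∈ cs.parab I := Subgroup.subset_closure ⟨i, hi, rfl⟩

/-- `z` is a length-additive product of an `I`-word, `x`, and a `J`-word. -/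
def IsAdditive (cs : CoxeterSystem M W) (I : Set B) (x : W) (J : Set B) (z : W) : Prop :=
  ∃ α β : List B, (∀ i ∈ α, i ∈ I) ∧ (∀ j ∈ β, j ∈ J) ∧
    z = cs.wordProd α * x * cs.wordProd β ∧ cs.length z = α.length + cs.length x + β.length

lemma IsAdditive.inv {cs : CoxeterSystem M W} {I J : Set B} {x z : W}
    (h : cs.IsAdditive I x J z) : cs.IsAdditive J x⁻¹ I z⁻¹ := by
  obtain ⟨α, β, hα, hβ, rfl, hl⟩ := h
  refine ⟨β.reverse, α.reverse, by simpa using hβ, by simpa using hα, ?_, ?_⟩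
  · simp [mul_assoc]
  · rw [length_inv, length_inv, hl, List.length_reverse, List.length_reverse]; ring

/-- When `x` is of minimal length in `x W_J`, a right descent `j ∈ J` of an additive product
`a x b` can only delete a letter of the `a`-part or of the `b`-part. -/
lemma IsAdditive.mul_simple {cs : CoxeterSystem M W} {I J : Set B} {x z : W}
    (hmin : ∀ b ∈ cs.parab J, cs.length x ≤ cs.length (x * b))
    (h : cs.IsAdditive I x J z) {j : B} (hj : j ∈ J) :
    cs.IsAdditive I x J (z * cs.simple j) := by
  obtain ⟨α, β, hα, hβ, hz, hl⟩ := h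
  rcases cs.length_mul_simple z j with hd | hd
  · refine ⟨α, β ++ [j], hα, by grind, ?_, ?_⟩
    · rw [hz, wordProd_append]; simp [mul_assoc]
    · rw [hd, hl, List.length_append]; simp; ring
  · obtain ⟨ξ, hξ, hx⟩ := cs.exists_isReduced x
    have hzw : z = cs.wordProd (α ++ (ξ ++ β)) := by
      rw [hz, hx, wordProd_append, wordProd_append, mul_assoc]
    have hdes : cs.IsRightDescent (cs.wordProd (α ++ (ξ ++ β))) j := by
      rw [← hzw, isRightDescent_iff]; exact hd
    obtain ⟨k, hk, hke⟩ := cs.exists_eraseIdx_of_isRightDescent _ j hdes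
    rw [← hzw] at hke
    by_cases h1 : k < α.length
    · rw [List.eraseIdx_append_of_lt_length h1, wordProd_append, wordProd_append, ← hx,
        ← mul_assoc] at hke
      refine ⟨α.eraseIdx k, β, fun i hi => hα i (List.mem_of_mem_eraseIdx hi), hβ, hke, ?_⟩
      have := List.length_eraseIdx_add_one h1
      omega
    · push Not at h1
      rw [List.eraseIdx_append_of_length_le h1, wordProd_append] at hke
      by_cases h2 : k - α.length < ξ.length
      · -- deleting a letter of `x` would give a shorter element of `x W_J`
        exfalso
        rw [List.eraseIdx_append_of_lt_length h2, wordProd_append] at hke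
        set x' := cs.wordProd (ξ.eraseIdx (k - α.length)) with hx'
        have e : x' = x * (cs.wordProd β * cs.simple j * (cs.wordProd β)⁻¹) := by
          rw [hz, mul_assoc, mul_assoc, mul_right_inj] at hke
          rw [← mul_assoc, eq_mul_inv_iff_mul_eq, ← hke]
        have hb : cs.wordProd β ∈ cs.parab J := cs.mem_parab_iff.2 ⟨β, hβ, rfl⟩
        have h3 := hmin _ (mul_mem (mul_mem hb (cs.simple_mem_parab hj)) (inv_mem hb))
        rw [← e] at h3
        have h4 : cs.length x' ≤ _ := cs.length_wordProd_le (ξ.eraseIdx (k - α.length))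
        have h5 := List.length_eraseIdx_add_one h2
        have h6 : cs.length x = ξ.length := by rw [hx]; exact hξ
        omega
      · push Not at h2
        rw [List.eraseIdx_append_of_length_le h2, wordProd_append, ← hx, ← mul_assoc] at hke
        refine ⟨α, β.eraseIdx (k - α.length - ξ.length), hα,
          fun i hi => hβ i (List.mem_of_mem_eraseIdx hi), hke, ?_⟩
        have h3 : k - α.length - ξ.length < β.length := by
          simp only [List.length_append] at hk; omega
        have := List.length_eraseIdx_add_one h3
        omega

lemma IsAdditive.simple_mul {cs : CoxeterSystem M W} {I J : Set B} {x z : W}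
    (hmin : ∀ a ∈ cs.parab I, cs.length x ≤ cs.length (a * x))
    (h : cs.IsAdditive I x J z) {i : B} (hi : i ∈ I) :
    cs.IsAdditive I x J (cs.simple i * z) := by
  have h1 := (h.inv.mul_simple (j := i) (fun b hb => by
    have := hmin b⁻¹ (inv_mem hb)
    rwa [← cs.length_inv, ← cs.length_inv (b⁻¹ * x), mul_inv_rev, inv_inv] at this) hi).inv
  simpa using h1

lemma mem_doset_self_s19 (cs : CoxeterSystem M W) (I J : Set B) (w : W) : w ∈ cs.doset I w J :=
  ⟨1, one_mem _, 1, one_mem _, by simp⟩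

lemma doset_subset (cs : CoxeterSystem M W) {I J I' J' : Set B} {w w' : W} (hI : I' ⊆ I)
    (hJ : J' ⊆ J) (h : w' ∈ cs.doset I w J) : cs.doset I' w' J' ⊆ cs.doset I w J := by
  obtain ⟨a, ha, b, hb, rfl⟩ := h
  rintro _ ⟨c, hc, d, hd, rfl⟩
  have hI' : cs.parab I' ≤ cs.parab I := Subgroup.closure_mono (Set.image_mono hI)
  have hJ' : cs.parab J' ≤ cs.parab J := Subgroup.closure_mono (Set.image_mono hJ)
  exact ⟨c * a, mul_mem (hI' hc) ha, b * d, mul_mem hb (hJ' hd), by simp only [mul_assoc]⟩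

lemma mem_doset_comm (cs : CoxeterSystem M W) {I J : Set B} {w w' : W}
    (h : w' ∈ cs.doset I w J) : w ∈ cs.doset I w' J := by
  obtain ⟨a, ha, b, hb, rfl⟩ := h
  exact ⟨a⁻¹, inv_mem ha, b⁻¹, inv_mem hb, by group⟩

/-- Every double coset contains exactly one element without left descents in `I` and right descents
in `J`: its element `x` of minimal length, because all other elements are additive products
`a x b` with `a ≠ 1` or `b ≠ 1`. -/
lemma exists_isMinRep_forall_eq (cs : CoxeterSystem M W) (I J : Set B) (w : W) :
    ∃ x ∈ cs.doset I w J, cs.isMinRep I x J ∧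
      ∀ y ∈ cs.doset I w J, cs.isMinRep I y J → y = x := by
  obtain ⟨x, hx, hmin⟩ : ∃ x ∈ cs.doset I w J, ∀ y ∈ cs.doset I w J,
      cs.length x ≤ cs.length y := by
    obtain ⟨x, hx⟩ := exists_minimalFor_of_wellFoundedLT (· ∈ cs.doset I w J) cs.length
      ⟨w, cs.mem_doset_self_s19 I J w⟩
    exact ⟨x, hx.1, fun y hy => not_lt.1 (hx.not_lt hy)⟩
  have hsub := cs.doset_subset subset_rfl subset_rfl hx
  have hmem : ∀ a ∈ cs.parab I, ∀ b ∈ cs.parab J, a * x * b ∈ cs.doset I w J :=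
    fun a ha b hb => hsub ⟨a, ha, b, hb, rfl⟩
  have hminR : ∀ b ∈ cs.parab J, cs.length x ≤ cs.length (x * b) := fun b hb => by
    simpa using hmin _ (hmem 1 (one_mem _) b hb)
  have hminL : ∀ a ∈ cs.parab I, cs.length x ≤ cs.length (a * x) := fun a ha => by
    simpa using hmin _ (hmem a ha 1 (one_mem _))
  refine ⟨x, hx, ⟨fun i hi => not_lt.2 (hminL _ (cs.simple_mem_parab hi)),
    fun j hj => not_lt.2 (hminR _ (cs.simple_mem_parab hj))⟩, ?_⟩
  -- every element of the double coset is an additive product around `x`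
  have hadd : ∀ α β : List B, (∀ i ∈ α, i ∈ I) → (∀ j ∈ β, j ∈ J) →
      cs.IsAdditive I x J (cs.wordProd α * x * cs.wordProd β) := by
    intro α β hα hβ
    induction α with
    | nil =>
      induction β using List.reverseRecOn with
      | nil => exact ⟨[], [], by simp, by simp, by simp, by simp⟩
      | append_singleton β j ih =>
        have := (ih fun j hj => hβ j (by simp [hj])).mul_simple hminR (hβ j (by simp))
        simpa [wordProd_append, mul_assoc] using this
    | cons i α ih =>
      have := (ih fun j hj => hα j (by simp [hj])).simple_mul hminL (hα i (by simp))
      simpa [wordProd_cons, mul_assoc] using this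
  intro y hy hyr
  obtain ⟨a, ha, b, hb, rfl⟩ := cs.doset_subset subset_rfl subset_rfl (cs.mem_doset_comm hx) hy
  obtain ⟨α₀, hα₀, rfl⟩ := cs.mem_parab_iff.1 ha
  obtain ⟨β₀, hβ₀, rfl⟩ := cs.mem_parab_iff.1 hb
  obtain ⟨α, β, hα, hβ, hz, hl⟩ := hadd α₀ β₀ hα₀ hβ₀
  rw [hz] at hl hyr ⊢
  have hα0 : α = [] := by
    rcases α with _ | ⟨i, α⟩
    · rfl
    · exfalso
      refine hyr.1 i (hα i (by simp)) ?_
      rw [IsLeftDescent, hl, wordProd_cons]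
      simp only [mul_assoc, simple_mul_simple_cancel_left]
      have h1 := cs.length_mul_le (cs.wordProd α) (x * cs.wordProd β)
      have h2 := cs.length_mul_le x (cs.wordProd β)
      have h3 := cs.length_wordProd_le α
      have h4 := cs.length_wordProd_le β
      simp only [List.length_cons]
      omega
  have hβ0 : β = [] := by
    rcases List.eq_nil_or_concat β with h | ⟨β, j, rfl⟩
    · exact h
    · exfalso
      refine hyr.2 j (hβ j (by simp)) ?_
      rw [IsRightDescent, hl, wordProd_concat, ← mul_assoc, simple_mul_simple_cancel_right]
      have h1 := cs.length_mul_le (cs.wordProd α * x) (cs.wordProd β)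
      have h2 := cs.length_mul_le (cs.wordProd α) x
      have h3 := cs.length_wordProd_le α
      have h4 := cs.length_wordProd_le β
      simp only [List.concat_eq_append, List.length_append, List.length_singleton]
      omega
  simp [hα0, hβ0]

/-! ### The order of `Ξ` -/

lemma xiLE_iff (cs : CoxeterSystem M W) {F G : Set B × W × Set B} :
    cs.xiLE F G ↔ G.1 ⊆ F.1 ∧ G.2.2 ⊆ F.2.2 ∧ G.2.1 ∈ cs.doset F.1 F.2.1 F.2.2 :=
  ⟨fun h => ⟨h.1, h.2.1, h.2.2 (cs.mem_doset_self_s19 _ _ _)⟩,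
    fun h => ⟨h.1, h.2.1, cs.doset_subset h.1 h.2.1 h.2.2⟩⟩

lemma xiLE_refl (cs : CoxeterSystem M W) (F : Set B × W × Set B) : cs.xiLE F F :=
  ⟨subset_rfl, subset_rfl, subset_rfl⟩

lemma xiLE_trans {cs : CoxeterSystem M W} {F G H : Set B × W × Set B} (h : cs.xiLE F G)
    (h' : cs.xiLE G H) : cs.xiLE F H :=
  ⟨h'.1.trans h.1, h'.2.1.trans h.2.1, h'.2.2.trans h.2.2⟩

/-- The cotype of a face `(I, w, J)`: the pair `(I, J)`, encoded as a subset of `B ⊕ B`. -/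
def cotype (F : Set B × W × Set B) : Set (B ⊕ B) := {x | Sum.elim (· ∈ F.1) (· ∈ F.2.2) x}

set_option linter.unusedSectionVars false in
lemma cotype_subset_iff {F G : Set B × W × Set B} :
    cotype F ⊆ cotype G ↔ F.1 ⊆ G.1 ∧ F.2.2 ⊆ G.2.2 := by
  constructor
  · intro h
    exact ⟨fun i hi => @h (Sum.inl i) hi, fun i hi => @h (Sum.inr i) hi⟩
  · rintro ⟨h, h'⟩ (i | i) hi
    · exact h hi
    · exact h' hi

lemma cotype_subset_of_xiLE {cs : CoxeterSystem M W} {F G : Set B × W × Set B}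
    (h : cs.xiLE F G) : cotype G ⊆ cotype F := cotype_subset_iff.2 ⟨h.1, h.2.1⟩

/-- Below a face there is a face of every larger cotype, given by the minimal representative of the
larger double coset. -/
lemma exists_xiLE_cotype_eq (cs : CoxeterSystem M W) (G : Set B × W × Set B) {T : Set (B ⊕ B)}
    (h : cotype G ⊆ T) : ∃ Z, cs.inXi Z ∧ cs.xiLE Z G ∧ cotype Z = T := by
  obtain ⟨x, hx, hr, -⟩ := cs.exists_isMinRep_forall_eq (Sum.inl ⁻¹' T) (Sum.inr ⁻¹' T) G.2.1
  refine ⟨(Sum.inl ⁻¹' T, x, Sum.inr ⁻¹' T), hr, cs.xiLE_iff.2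
    ⟨fun i hi => @h (Sum.inl i) hi, fun i hi => @h (Sum.inr i) hi, cs.mem_doset_comm hx⟩, ?_⟩
  ext (i | i) <;> rfl

/-- A face is determined by its cotype and by any face above it, since minimal double coset
representatives are unique. -/
lemma eq_of_cotype_eq {cs : CoxeterSystem M W} {Z Z' G : Set B × W × Set B} (hZ : cs.inXi Z)
    (hZ' : cs.inXi Z') (h : cs.xiLE Z G) (h' : cs.xiLE Z' G) (e : cotype Z = cotype Z') :
    Z = Z' := by
  obtain ⟨I, w, J⟩ := Z
  obtain ⟨I', w', J'⟩ := Z'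
  have e1 := cotype_subset_iff.1 e.subset
  have e2 := cotype_subset_iff.1 e.symm.subset
  obtain rfl : I = I' := e1.1.antisymm e2.1
  obtain rfl : J = J' := e1.2.antisymm e2.2
  obtain ⟨x, -, -, hu⟩ := cs.exists_isMinRep_forall_eq I J G.2.1
  rw [hu w (cs.mem_doset_comm (cs.xiLE_iff.1 h).2.2) hZ,
    hu w' (cs.mem_doset_comm (cs.xiLE_iff.1 h').2.2) hZ']

/-- Below a fixed face, the order is reverse inclusion of cotypes. -/
lemma xiLE_of_cotype_subset {cs : CoxeterSystem M W} {Z Z' G : Set B × W × Set B}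
    (hZ : cs.inXi Z) (h : cs.xiLE Z G) (h' : cs.xiLE Z' G) (e : cotype Z' ⊆ cotype Z) :
    cs.xiLE Z Z' := by
  obtain ⟨Y, hY, hYZ', hYe⟩ := cs.exists_xiLE_cotype_eq Z' e
  rwa [eq_of_cotype_eq hZ hY h (xiLE_trans hYZ' h') hYe.symm]

lemma cotype_covBy {cs : CoxeterSystem M W} {F H : Set B × W × Set B} (hF : cs.inXi F)
    (hH : cs.inXi H) (h : cs.xiCovBy F H) : cotype H ⋖ cotype F := by
  obtain ⟨⟨hFH, hHF⟩, hcov⟩ := h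
  refine ⟨⟨cotype_subset_of_xiLE hFH, fun hs =>
    hHF (xiLE_of_cotype_subset hH (cs.xiLE_refl H) hFH hs)⟩, fun T hHT hTF => ?_⟩
  obtain ⟨Z, hZ, hZH, rfl⟩ := cs.exists_xiLE_cotype_eq H hHT.le
  have hFZ := xiLE_of_cotype_subset hF hFH hZH hTF.le
  exact hcov Z hZ ⟨hFZ, fun h => hTF.not_ge (cotype_subset_of_xiLE h)⟩
    ⟨hZH, fun h => hHT.not_ge (cotype_subset_of_xiLE h)⟩

/-- The interval `[F, G]` of `Ξ` is the Boolean interval between the cotypes. -/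
lemma card_interval {cs : CoxeterSystem M W} {F G : Set B × W × Set B} (hF : cs.inXi F)
    (h : cs.xiLE F G) :
    Nat.card {Z : Set B × W × Set B // cs.inXi Z ∧ cs.xiLE F Z ∧ cs.xiLE Z G} =
      Nat.card (Set.Icc (cotype G) (cotype F)) := by
  refine Nat.card_congr (Equiv.ofBijective (fun Z => ⟨cotype Z.1,
    cotype_subset_of_xiLE Z.2.2.2, cotype_subset_of_xiLE Z.2.2.1⟩) ⟨?_, ?_⟩)
  · rintro ⟨Z, hZ, hFZ, hZG⟩ ⟨Z', hZ', hFZ', hZG'⟩ e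
    exact Subtype.ext (eq_of_cotype_eq hZ hZ' hZG hZG' (congrArg Subtype.val e))
  · rintro ⟨T, hGT, hTF⟩
    obtain ⟨Z, hZ, hZG, rfl⟩ := cs.exists_xiLE_cotype_eq G hGT
    exact ⟨⟨Z, hZ, xiLE_of_cotype_subset hF h hZG hTF, hZG⟩, rfl⟩

lemma card_Icc_of_covBy_covBy {α : Type*} {X Y Z : Set α} (h : X ⋖ Y) (h' : Y ⋖ Z) :
    Nat.card (Set.Icc X Z) = 4 := by
  obtain ⟨x, hx, rfl⟩ := Set.covBy_iff_exists_insert.1 h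
  obtain ⟨y, hy, rfl⟩ := Set.covBy_iff_exists_insert.1 h'
  have hyX : y ∉ X := fun h => hy (Set.mem_insert_of_mem _ h)
  have hxy : x ≠ y := by rintro rfl; exact hy (Set.mem_insert _ _)
  have e : Set.Icc X (insert y (insert x X)) =
      {X, insert x X, insert y X, insert y (insert x X)} := by
    ext T
    simp only [Set.mem_Icc, Set.mem_insert_iff, Set.mem_singleton_iff]
    constructor
    · rintro ⟨h1, h2⟩
      by_cases hxT : x ∈ T <;> by_cases hyT : y ∈ T
      · right; right; right
        exact h2.antisymm (Set.insert_subset hyT (Set.insert_subset hxT h1))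
      · right; left
        exact ((Set.subset_insert_iff_of_notMem hyT).1 h2).antisymm (Set.insert_subset hxT h1)
      · right; right; left
        rw [Set.insert_comm] at h2
        exact ((Set.subset_insert_iff_of_notMem hxT).1 h2).antisymm (Set.insert_subset hyT h1)
      · left
        exact ((Set.subset_insert_iff_of_notMem hxT).1
          ((Set.subset_insert_iff_of_notMem hyT).1 h2)).antisymm h1
    · rintro (rfl | rfl | rfl | rfl)
      · exact ⟨subset_rfl, (Set.subset_insert _ _).trans (Set.subset_insert _ _)⟩
      · exact ⟨Set.subset_insert _ _, Set.subset_insert _ _⟩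
      · exact ⟨Set.subset_insert _ _, Set.insert_subset_insert (Set.subset_insert _ _)⟩
      · exact ⟨(Set.subset_insert _ _).trans (Set.subset_insert _ _), subset_rfl⟩
  have n1 : X ≠ insert x X := fun h => hx (h ▸ Set.mem_insert _ _)
  have n2 : X ≠ insert y X := fun h => hyX (h ▸ Set.mem_insert _ _)
  have n3 : X ≠ insert y (insert x X) := fun h => hyX (h ▸ Set.mem_insert _ _)
  have n4 : insert x X ≠ insert y X := fun h => hy (h ▸ Set.mem_insert _ _)
  have n5 : insert x X ≠ insert y (insert x X) := fun h => hy (h ▸ Set.mem_insert _ _)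
  have n6 : insert y X ≠ insert y (insert x X) := fun h => by
    have : x ∈ insert y X := h ▸ Set.mem_insert_of_mem _ (Set.mem_insert _ _)
    exact this.elim hxy hx
  rw [Nat.card_coe_set_eq, e, Set.ncard_insert_of_notMem (by simp [n1, n2, n3]),
    Set.ncard_insert_of_notMem (by simp [n4, n5]), Set.ncard_pair n6]

lemma card_interval_eq_four {cs : CoxeterSystem M W} {F H G : Set B × W × Set B}
    (hF : cs.inXi F) (hH : cs.inXi H) (hG : cs.inXi G) (h : cs.xiCovBy F H)
    (h' : cs.xiCovBy H G) :
    Nat.card {Z : Set B × W × Set B // cs.inXi Z ∧ cs.xiLE F Z ∧ cs.xiLE Z G} = 4 := by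
  rw [card_interval hF (xiLE_trans h.1.1 h'.1.1)]
  exact card_Icc_of_covBy_covBy (cotype_covBy hH hG h') (cotype_covBy hF hH h)

/-! ### Faces of codimension one and the adjoined maximum -/

lemma parab_empty (cs : CoxeterSystem M W) : cs.parab ∅ = ⊥ := by simp [parab]

lemma mem_parab_singleton (cs : CoxeterSystem M W) {i : B} {a : W} :
    a ∈ cs.parab {i} ↔ a = 1 ∨ a = cs.simple i := by
  constructor
  · intro h
    rw [parab, Set.image_singleton] at h
    induction h using Subgroup.closure_induction with
    | mem x hx => exact Or.inr hx
    | one => exact Or.inl rfl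
    | mul x y _ _ hx hy => rcases hx with rfl | rfl <;> rcases hy with rfl | rfl <;> simp
    | inv x _ hx => rcases hx with rfl | rfl <;> simp
  · rintro (rfl | rfl)
    · exact one_mem _
    · exact cs.simple_mem_parab rfl

lemma mem_doset_singleton_right (cs : CoxeterSystem M W) {w v : W} {i : B} :
    v ∈ cs.doset ∅ w {i} ↔ v = w ∨ v = w * cs.simple i := by
  simp only [doset, parab_empty, Subgroup.mem_bot, mem_parab_singleton, Set.mem_ofPred_eq]
  simp

lemma mem_doset_singleton_left (cs : CoxeterSystem M W) {w v : W} {i : B} :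
    v ∈ cs.doset {i} w ∅ ↔ v = w ∨ v = cs.simple i * w := by
  simp only [doset, parab_empty, Subgroup.mem_bot, mem_parab_singleton, Set.mem_ofPred_eq]
  simp

lemma inXi_empty (cs : CoxeterSystem M W) (w : W) : cs.inXi (∅, w, ∅) :=
  ⟨fun _ h => h.elim, fun _ h => h.elim⟩

set_option linter.unusedSectionVars false in
lemma cotype_empty (w : W) : cotype ((∅ : Set B), w, (∅ : Set B)) = ∅ := by
  ext (i | i) <;> simp [cotype]

lemma eq_empty_of_cotype_eq_empty {Z : Set B × W × Set B} (h : cotype Z = ∅) :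
    Z = (∅, Z.2.1, ∅) := by
  have := cotype_subset_iff.1 (h.trans (cotype_empty Z.2.1).symm).subset
  obtain ⟨I, w, J⟩ := Z
  simp_all

/-- A face covered by `1̂` is maximal in `Ξ`, that is of the form `(∅, w, ∅)`. -/
lemma cotype_eq_empty_of_covBy_none {cs : CoxeterSystem M W} {H : Set B × W × Set B}
    (h : cs.xiTopCovBy (some H) none) : cotype H = ∅ := by
  by_contra hne
  refine h.2 (some (∅, H.2.1, ∅)) (cs.inXi_empty _) ⟨?_, fun hle => hne ?_⟩ ⟨trivial, id⟩
  · exact cs.xiLE_iff.2 ⟨Set.empty_subset _, Set.empty_subset _, cs.mem_doset_self_s19 _ _ _⟩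
  · have := cotype_subset_of_xiLE hle
    rwa [cotype_empty, Set.subset_empty_iff] at this

lemma xiCovBy_of_xiTopCovBy {cs : CoxeterSystem M W} {F H : Set B × W × Set B}
    (h : cs.xiTopCovBy (some F) (some H)) : cs.xiCovBy F H :=
  ⟨h.1, fun Z hZ => h.2 (some Z) hZ⟩

/-- If exactly the two maximal faces `(∅, w, ∅)` and `(∅, w', ∅)` lie above a face `F` of
cotype a singleton, then the interval `[F, 1̂]` has four elements. -/
lemma card_interval_top {cs : CoxeterSystem M W} {F : Set B × W × Set B} (hF : cs.inXi F)
    {x : B ⊕ B} (hx : cotype F = {x}) {w w' : W} (hne : w ≠ w')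
    (hv : ∀ v, cs.xiLE F (∅, v, ∅) ↔ v = w ∨ v = w') :
    Nat.card {z : Option (Set B × W × Set B) //
      cs.inXiTop z ∧ cs.xiTopLE (some F) z ∧ cs.xiTopLE z none} = 4 := by
  have hFne : ∀ v, F ≠ (∅, v, ∅) := by
    rintro v rfl
    rw [cotype_empty] at hx
    exact Set.singleton_ne_empty x hx.symm
  have e : {z : Option (Set B × W × Set B) |
      cs.inXiTop z ∧ cs.xiTopLE (some F) z ∧ cs.xiTopLE z none} =
      {none, some F, some (∅, w, ∅), some (∅, w', ∅)} := by
    ext z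
    simp only [Set.mem_ofPred_eq, Set.mem_insert_iff, Set.mem_singleton_iff]
    constructor
    · rintro ⟨hz, hFz, -⟩
      rcases z with _ | Z
      · exact Or.inl rfl
      · right
        have hs := cotype_subset_of_xiLE hFz
        rw [hx, Set.subset_singleton_iff_eq] at hs
        rcases hs with hs | hs
        · rw [eq_empty_of_cotype_eq_empty hs] at hFz ⊢
          rcases (hv _).1 hFz with h | h <;> simp [h]
        · left
          rw [eq_of_cotype_eq hF hz hFz (cs.xiLE_refl Z) (hx.trans hs.symm)]
    · rintro (rfl | rfl | rfl | rfl)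
      · exact ⟨trivial, trivial, trivial⟩
      · exact ⟨hF, cs.xiLE_refl F, trivial⟩
      · exact ⟨cs.inXi_empty _, (hv w).2 (Or.inl rfl), trivial⟩
      · exact ⟨cs.inXi_empty _, (hv w').2 (Or.inr rfl), trivial⟩
  change Nat.card ({z | _} : Set _) = 4
  rw [Nat.card_coe_set_eq, e, Set.ncard_insert_of_notMem (by simp),
    Set.ncard_insert_of_notMem (by simp [hFne]), Set.ncard_pair (by simp [hne])]

lemma xiLE_singleton_right_iff (cs : CoxeterSystem M W) {w v : W} {i : B} :
    cs.xiLE (∅, w, {i}) (∅, v, ∅) ↔ v = w ∨ v = w * cs.simple i := by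
  rw [xiLE_iff, ← mem_doset_singleton_right]
  simp

lemma xiLE_singleton_left_iff (cs : CoxeterSystem M W) {w v : W} {i : B} :
    cs.xiLE ({i}, w, ∅) (∅, v, ∅) ↔ v = w ∨ v = cs.simple i * w := by
  rw [xiLE_iff, ← mem_doset_singleton_left]
  simp

lemma ne_mul_simple (cs : CoxeterSystem M W) (w : W) (i : B) : w ≠ w * cs.simple i :=
  fun h => cs.length_mul_simple_ne w i (congrArg cs.length h.symm)

lemma ne_simple_mul (cs : CoxeterSystem M W) (w : W) (i : B) : w ≠ cs.simple i * w :=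
  fun h => cs.length_simple_mul_ne w i (congrArg cs.length h.symm)

end CoxeterSystem

/-- The poset `Ξ ∪ {1̂}` is thin: every interval of length two has exactly
four elements. In particular every interval of length two within `Ξ` has exactly four
elements, and every codimension-one face `(∅, w, {s})` (resp. `({s}, w, ∅)`), with `s` a
right (resp. left) ascent of `w`, lies below exactly the two maximal faces `(∅,w,∅)` and
`(∅,ws,∅)` (resp. `(∅,w,∅)` and `(∅,sw,∅)`). -/
theorem xi_thin (cs : CoxeterSystem M W) :
    (∀ a b : Option (Set B × W × Set B), cs.inXiTop a → cs.inXiTop b →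
      (∃ c, cs.inXiTop c ∧ cs.xiTopCovBy a c ∧ cs.xiTopCovBy c b) →
      Nat.card {z : Option (Set B × W × Set B) //
        cs.inXiTop z ∧ cs.xiTopLE a z ∧ cs.xiTopLE z b} = 4) ∧
    (∀ F G : Set B × W × Set B, cs.inXi F → cs.inXi G →
      (∃ H, cs.inXi H ∧ cs.xiCovBy F H ∧ cs.xiCovBy H G) →
      Nat.card {Z : Set B × W × Set B //
        cs.inXi Z ∧ cs.xiLE F Z ∧ cs.xiLE Z G} = 4) ∧
    (∀ (w : W) (i : B), cs.length (w * cs.simple i) > cs.length w →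
      {v : W | cs.xiLE ((∅ : Set B), w, ({i} : Set B)) ((∅ : Set B), v, (∅ : Set B))} =
          {w, w * cs.simple i} ∧ w ≠ w * cs.simple i) ∧
    (∀ (w : W) (i : B), cs.length (cs.simple i * w) > cs.length w →
      {v : W | cs.xiLE (({i} : Set B), w, (∅ : Set B)) ((∅ : Set B), v, (∅ : Set B))} =
          {w, cs.simple i * w} ∧ w ≠ cs.simple i * w) := by
  refine ⟨?_, ?_, ?_, ?_⟩
  · rintro a b ha hb ⟨c, hc, hac, hcb⟩
    -- the middle element of a chain is a face, and so is the bottom one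
    obtain _ | H := c
    · exact absurd trivial hcb.1.2
    obtain _ | F := a
    · exact hac.1.1.elim
    have hFH := xiCovBy_of_xiTopCovBy hac
    obtain _ | G := b
    · have hcov := cotype_covBy ha hc hFH
      rw [cotype_eq_empty_of_covBy_none hcb] at hcov
      obtain ⟨x, -, hx⟩ := Set.covBy_iff_exists_insert.1 hcov
      obtain ⟨I, w, J⟩ := F
      rcases x with i | i
      · obtain rfl : I = {i} := by
          ext j; simpa [cotype] using Set.ext_iff.1 hx.symm (Sum.inl j)
        obtain rfl : J = ∅ := by
          ext j; simpa [cotype] using Set.ext_iff.1 hx.symm (Sum.inr j)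
        exact card_interval_top ha (x := Sum.inl i) (by rw [← hx]; simp) (cs.ne_simple_mul w i)
          fun v => cs.xiLE_singleton_left_iff
      · obtain rfl : J = {i} := by
          ext j; simpa [cotype] using Set.ext_iff.1 hx.symm (Sum.inr j)
        obtain rfl : I = ∅ := by
          ext j; simpa [cotype] using Set.ext_iff.1 hx.symm (Sum.inl j)
        exact card_interval_top ha (x := Sum.inr i) (by rw [← hx]; simp) (cs.ne_mul_simple w i)
          fun v => cs.xiLE_singleton_right_iff
    · rw [← card_interval_eq_four ha hc hb hFH (xiCovBy_of_xiTopCovBy hcb)]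
      refine (Nat.card_congr (Equiv.ofBijective (fun Z => ⟨some Z.1, Z.2⟩) ⟨?_, ?_⟩)).symm
      · intro Z Z' e
        exact Subtype.ext (Option.some_injective _ (congrArg Subtype.val e))
      · rintro ⟨_ | Z, hZ⟩
        · exact hZ.2.2.elim
        · exact ⟨⟨Z, hZ⟩, rfl⟩
  · rintro F G hF hG ⟨H, hH, hFH, hHG⟩
    exact card_interval_eq_four hF hH hG hFH hHG
  · intro w i _
    exact ⟨Set.ext fun v => cs.xiLE_singleton_right_iff, cs.ne_mul_simple w i⟩
  · intro w i _
    exact ⟨Set.ext fun v => cs.xiLE_singleton_left_iff, cs.ne_simple_mul w i⟩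
end
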